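/- Telescoping of KL under greedy composition: for ℓ ≥ 1 let T_ℓ ∈ 𝒯_r(U^ℓ) minimize D_KL(π_{ℓ−1} ‖ (T_ℓ)_♯ρ), where π_{ℓ−1} = (T_1 ∘ ⋯ ∘ T_{ℓ−1})^♯ π and π_0 = π. Writing R_ℓ = D_KL((U_r^{ℓᵀ})_♯ π_{ℓ−1} ‖ ρ_r), one has D_KL(π_ℓ ‖ ρ) = D_KL(π ‖ ρ) − Σ_{k=1}^{ℓ} R_k. In particular, if D_KL(π ‖ ρ) < ∞ then R_k → 0 as k → ∞. -/

import Mathlib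

open MeasureTheory Matrix Filter
open scoped ENNReal

/-- Standard Gaussian density on `ℝ^d`. -/
noncomputable def gaussD (d : ℕ) (x : Fin d → ℝ) : ℝ :=
  (2 * Real.pi) ^ (-(d : ℝ) / 2) * Real.exp (-(∑ i, (x i) ^ 2) / 2)

/-- Standard Gaussian measure on `ℝ^d`. -/
noncomputable def stdGauss (d : ℕ) : Measure (Fin d → ℝ) :=
  volume.withDensity (fun x => ENNReal.ofReal (gaussD d x))

open Classical in
/-- Kullback--Leibler divergence, valued in `ℝ≥0∞`. -/
noncomputable def klDiv {E : Type*} [MeasurableSpace E] (μ ν : Measure E) : ℝ≥0∞ :=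
  if μ ≪ ν ∧ Integrable (fun x => Real.log ((μ.rnDeriv ν x).toReal)) μ
  then ENNReal.ofReal (∫ x, Real.log ((μ.rnDeriv ν x).toReal) ∂μ)
  else ⊤

/-- First `r` columns of a `d×d` matrix. -/
def colsFirst {d : ℕ} (r : ℕ) (hr : r ≤ d) (U : Matrix (Fin d) (Fin d) ℝ) :
    Matrix (Fin d) (Fin r) ℝ :=
  fun i j => U i (Fin.castLE hr j)

/-- Last `d - r` columns of a `d×d` matrix. -/
def colsLast {d : ℕ} (r : ℕ) (hr : r ≤ d) (U : Matrix (Fin d) (Fin d) ℝ) :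
    Matrix (Fin d) (Fin (d - r)) ℝ :=
  fun i j => U i ⟨r + (j : ℕ), by have := j.isLt; omega⟩

/-- A pair of maps forming a (C¹) diffeomorphism of `ℝ^n`. -/
def IsDiffeo {n : ℕ} (τ σ : (Fin n → ℝ) → (Fin n → ℝ)) : Prop :=
  ContDiff ℝ 1 τ ∧ ContDiff ℝ 1 σ ∧ Function.LeftInverse σ τ ∧ Function.RightInverse σ τ

/-- The lazy map `T(z) = U_r τ(z_{1:r}) + U_⊥ z_⊥`. -/
noncomputable def lazyMap {d r : ℕ} (hr : r ≤ d) (U : Matrix (Fin d) (Fin d) ℝ)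
    (τ : (Fin r → ℝ) → (Fin r → ℝ)) (z : Fin d → ℝ) : Fin d → ℝ :=
  (colsFirst r hr U).mulVec (τ (fun j => z (Fin.castLE hr j))) +
  (colsLast r hr U).mulVec (fun j => z ⟨r + (j : ℕ), by have := j.isLt; omega⟩)

/-- Membership in the class `𝒯_r(U)` of lazy maps. -/
def IsLazy {d : ℕ} (r : ℕ) (hr : r ≤ d) (U : Matrix (Fin d) (Fin d) ℝ)
    (T : (Fin d → ℝ) → (Fin d → ℝ)) : Prop :=
  ∃ τ σ, IsDiffeo τ σ ∧ T = lazyMap hr U τ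

theorem klDiv_eq_informationTheory_klDiv {E : Type*} [MeasurableSpace E] (μ ν : Measure E)
    [IsProbabilityMeasure μ] [IsProbabilityMeasure ν] :
    klDiv μ ν = InformationTheory.klDiv μ ν := by
  rw [klDiv, InformationTheory.klDiv_def]
  simp only [llr_def, probReal_univ, add_sub_cancel_right]
  congr

theorem klDiv_map_measurableEquiv {E F : Type*} [MeasurableSpace E] [MeasurableSpace F]
    (μ ν : Measure E) [IsProbabilityMeasure μ] [IsProbabilityMeasure ν] (e : E ≃ᵐ F) :
    InformationTheory.klDiv (μ.map e) (ν.map e) = InformationTheory.klDiv μ ν := by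
  apply le_antisymm (InformationTheory.klDiv_map_le μ ν e.measurable)
  have h := InformationTheory.klDiv_map_le (μ.map e) (ν.map e) e.symm.measurable
  simpa using h

theorem integral_log_nonpos_of_klDiv_le {E : Type*} [MeasurableSpace E] (μ ν : Measure E)
    [IsProbabilityMeasure μ] [IsProbabilityMeasure ν] {J : E → ℝ} (hJm : Measurable J)
    (hJ : ∀ x, 0 < J x) [IsProbabilityMeasure (ν.withDensity fun x => ENNReal.ofReal (J x))]
    (hfin : InformationTheory.klDiv μ ν ≠ ⊤)
    (hint : Integrable (fun x => Real.log (J x)) μ)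
    (hle : InformationTheory.klDiv μ ν ≤
      InformationTheory.klDiv μ (ν.withDensity fun x => ENNReal.ofReal (J x))) :
    ∫ x, Real.log (J x) ∂μ ≤ 0 := by
  obtain ⟨hac, hllr⟩ := InformationTheory.klDiv_ne_top_iff.1 hfin
  set ν' := ν.withDensity fun x => ENNReal.ofReal (J x) with hν'
  have hJm' : Measurable fun x => ENNReal.ofReal (J x) := hJm.ennreal_ofReal
  have hνν' : ν ≪ ν' := withDensity_absolutelyContinuous' hJm'.aemeasurable
    (ae_of_all _ fun x => by simpa using hJ x)
  have hac' : μ ≪ ν' := hac.trans hνν'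
  have hder : llr μ ν' =ᵐ[μ] fun x => llr μ ν x - Real.log (J x) := by
    have h1 := hac.ae_le (Measure.rnDeriv_withDensity_right μ ν hJm'.aemeasurable
      (ae_of_all _ fun x => by simpa using hJ x) (ae_of_all _ fun x => ENNReal.ofReal_ne_top))
    filter_upwards [h1, Measure.rnDeriv_pos hac, hac.ae_le (μ.rnDeriv_ne_top ν)] with x hx hp ht
    have hpos : 0 < (μ.rnDeriv ν x).toReal := ENNReal.toReal_pos hp.ne' ht
    rw [llr, hx, llr, ENNReal.toReal_mul, ENNReal.toReal_inv, ENNReal.toReal_ofReal (hJ x).le,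
      Real.log_mul (inv_ne_zero (hJ x).ne') hpos.ne', Real.log_inv]
    ring
  have hllr' : Integrable (llr μ ν') μ := (hllr.sub hint).congr hder.symm
  have h := ENNReal.toReal_mono (InformationTheory.klDiv_ne_top hac' hllr') hle
  rw [InformationTheory.toReal_klDiv_of_measure_eq hac (by simp),
    InformationTheory.toReal_klDiv_of_measure_eq hac' (by simp), integral_congr_ae hder,
    integral_sub hllr hint] at h
  linarith

theorem integrable_of_klDiv_ne_top {E : Type*} [MeasurableSpace E] (μ ν : Measure E)
    [IsProbabilityMeasure μ] [IsProbabilityMeasure ν] {f : E → ℝ} (hf : Measurable f)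
    (hfin : InformationTheory.klDiv μ ν ≠ ⊤)
    (hexp : Integrable (fun x => Real.exp |f x|) ν) : Integrable f μ := by
  obtain ⟨hac, hllr⟩ := InformationTheory.klDiv_ne_top_iff.1 hfin
  have h1 := (integrable_rnDeriv_mul_log_iff hac).2 hllr
  rw [← integrable_rnDeriv_smul_iff hac]
  refine (h1.norm.add hexp).mono' ?_ (ae_of_all _ fun x => ?_)
  · exact ((μ.measurable_rnDeriv ν).ennreal_toReal.smul hf).aestronglyMeasurable
  · set y := (μ.rnDeriv ν x).toReal
    have hy : 0 ≤ y := ENNReal.toReal_nonneg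
    simp only [smul_eq_mul, norm_mul, Real.norm_eq_abs, abs_of_nonneg hy, Pi.add_apply]
    rcases hy.eq_or_lt with h0 | h0
    · rw [← h0]; simp; positivity
    · have h2 := Real.add_one_le_exp (|f x| - Real.log y)
      rw [Real.exp_sub, Real.exp_log h0, le_div_iff₀ h0] at h2
      have h3 := mul_le_mul_of_nonneg_left (le_abs_self (Real.log y)) hy
      rw [abs_of_nonneg (a := (μ.rnDeriv ν x).toReal) hy]
      change y * |f x| ≤ y * |Real.log y| + Real.exp |f x|
      nlinarith

theorem stdGauss_eq_pi (d : ℕ) :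
    stdGauss d = Measure.pi fun _ : Fin d => ProbabilityTheory.gaussianReal 0 1 := by
  have hpdf : ∀ x : Fin d → ℝ, ENNReal.ofReal (gaussD d x) =
      ∏ i, ProbabilityTheory.gaussianPDF 0 1 (x i) := by
    intro x
    simp only [ProbabilityTheory.gaussianPDF]
    rw [← ENNReal.ofReal_prod_of_nonneg fun i _ => ProbabilityTheory.gaussianPDFReal_nonneg _ _ _]
    congr 1
    simp only [gaussD, ProbabilityTheory.gaussianPDFReal, Finset.prod_mul_distrib,
      ← Real.exp_sum, Finset.prod_const, Finset.card_univ, Fintype.card_fin]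
    congr 1
    · rw [Real.sqrt_eq_rpow, ← Real.rpow_neg (by positivity), ← Real.rpow_natCast,
        ← Real.rpow_mul (by positivity)]
      simp
      congr 1; ring
    · simp [Finset.sum_div, neg_div]
  symm
  apply Measure.pi_eq
  intro s hs
  have hint : ∀ i, Integrable (ProbabilityTheory.gaussianPDFReal 0 1) (volume.restrict (s i)) :=
    fun i => (ProbabilityTheory.integrable_gaussianPDFReal 0 1).integrableOn
  rw [stdGauss, withDensity_apply _ (MeasurableSet.univ_pi hs), volume_pi, Measure.restrict_pi_pi]
  simp_rw [hpdf, ProbabilityTheory.gaussianPDF]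
  simp_rw [← ENNReal.ofReal_prod_of_nonneg fun i _ =>
    ProbabilityTheory.gaussianPDFReal_nonneg _ _ _]
  rw [← ofReal_integral_eq_lintegral_ofReal (Integrable.fintype_prod hint)
      (ae_of_all _ fun x => Finset.prod_nonneg fun i _ =>
        ProbabilityTheory.gaussianPDFReal_nonneg _ _ _),
    integral_fintype_prod_eq_prod, ENNReal.ofReal_prod_of_nonneg
      fun i _ => integral_nonneg fun x => ProbabilityTheory.gaussianPDFReal_nonneg _ _ _]
  refine Finset.prod_congr rfl fun i _ => ?_
  rw [ProbabilityTheory.gaussianReal_apply_eq_integral _ one_ne_zero]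

/-- The shear `x ↦ x + g(⟨a, x⟩) a`. -/
def shear {n : ℕ} (a : Fin n → ℝ) (g : ℝ → ℝ) (x : Fin n → ℝ) : Fin n → ℝ :=
  x + g (a ⬝ᵥ x) • a

theorem dotProduct_shear {n : ℕ} (a : Fin n → ℝ) (g : ℝ → ℝ) (x : Fin n → ℝ) :
    a ⬝ᵥ shear a g x = a ⬝ᵥ x + (a ⬝ᵥ a) * g (a ⬝ᵥ x) := by
  simp [shear, dotProduct_add, dotProduct_smul, mul_comm]

theorem contDiff_dotProduct {n : ℕ} (a : Fin n → ℝ) : ContDiff ℝ 1 fun x => a ⬝ᵥ x := by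
  unfold dotProduct
  fun_prop

theorem exists_inverse_id_add {c C : ℝ} {g g' : ℝ → ℝ} (hg : ∀ s, HasDerivAt g (g' s) s)
    (hg' : Continuous g') (hgb : ∀ s, |g s| ≤ C) (hgb' : ∀ s, |c * g' s| ≤ 1 / 2) :
    ∃ h : ℝ → ℝ, ContDiff ℝ 1 h ∧ (∀ s, h (s + c * g s) = s) ∧ ∀ s, h s + c * g (h s) = s := by
  set k : ℝ → ℝ := fun s => s + c * g s
  have hk : ∀ s, HasDerivAt k (1 + c * g' s) s := fun s =>
    (hasDerivAt_id s).add ((hg s).const_mul c)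
  have hpos : ∀ s, 0 < 1 + c * g' s := fun s => by
    have := (abs_le.1 (hgb' s)).1; linarith
  have hkc : Continuous k := continuous_iff_continuousAt.2 fun s => (hk s).continuousAt
  have hmono : StrictMono k := strictMono_of_deriv_pos fun s => by
    rw [(hk s).deriv]; exact hpos s
  have hbd : ∀ s, |c * g s| ≤ |c| * C := fun s => by
    rw [abs_mul]; exact mul_le_mul_of_nonneg_left (hgb s) (abs_nonneg c)
  have hsurj : Function.Surjective k := hkc.surjective
    (tendsto_atTop_add_right_of_le _ _ tendsto_id fun s => (abs_le.1 (hbd s)).1)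
    (tendsto_atBot_add_right_of_ge _ _ tendsto_id fun s => (abs_le.1 (hbd s)).2)
  set e := (hmono.orderIsoOfSurjective k hsurj).toHomeomorph
  have hkcd : ContDiff ℝ 1 k := by
    rw [contDiff_one_iff_deriv]
    refine ⟨fun s => (hk s).differentiableAt, ?_⟩
    rw [show deriv k = fun s => 1 + c * g' s from funext fun s => (hk s).deriv]
    fun_prop
  exact ⟨e.symm, e.contDiff_symm_deriv (fun s => (hpos s).ne') hk hkcd,
    fun s => e.symm_apply_apply s, fun s => e.apply_symm_apply s⟩

theorem exists_isDiffeo_shear {n : ℕ} (a : Fin n → ℝ) {C : ℝ} {g g' : ℝ → ℝ}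
    (hg : ∀ s, HasDerivAt g (g' s) s) (hg' : Continuous g') (hgb : ∀ s, |g s| ≤ C)
    (hgb' : ∀ s, |(a ⬝ᵥ a) * g' s| ≤ 1 / 2) : ∃ τ, IsDiffeo τ (shear a g) := by
  obtain ⟨h, hh, hl, hr⟩ := exists_inverse_id_add hg hg' hgb hgb'
  have hgc : ContDiff ℝ 1 g := by
    rw [contDiff_one_iff_deriv]
    refine ⟨fun s => (hg s).differentiableAt, ?_⟩
    rwa [show deriv g = g' from funext fun s => (hg s).deriv]
  have hd := contDiff_dotProduct a
  have hdot : ∀ x, a ⬝ᵥ (x - g (h (a ⬝ᵥ x)) • a) = h (a ⬝ᵥ x) := fun x => by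
    have := hr (a ⬝ᵥ x)
    rw [dotProduct_sub, dotProduct_smul, smul_eq_mul]
    linarith
  refine ⟨fun x => x - g (h (a ⬝ᵥ x)) • a, ?_, ?_, fun x => ?_, fun x => ?_⟩
  · exact contDiff_id.sub ((hgc.comp (hh.comp hd)).smul contDiff_const)
  · exact contDiff_id.add ((hgc.comp hd).smul contDiff_const)
  · simp only [shear, hdot]
    simp
  · simp only [dotProduct_shear, hl]
    simp [shear]

theorem hasFDerivAt_shear {n : ℕ} (a : Fin n → ℝ) {g g' : ℝ → ℝ}
    (hg : ∀ s, HasDerivAt g (g' s) s) (x : Fin n → ℝ) :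
    HasFDerivAt (shear a g) (Matrix.toLin' (1 + replicateCol Unit (g' (a ⬝ᵥ x) • a) *
      replicateRow Unit a)).toContinuousLinearMap x := by
  have h1 : HasFDerivAt (fun x => a ⬝ᵥ x) (dotProductBilin ℝ ℝ a).toContinuousLinearMap x :=
    (dotProductBilin ℝ ℝ a).toContinuousLinearMap.hasFDerivAt
  have h2 := (hasFDerivAt_id (𝕜 := ℝ) x).add (((hg (a ⬝ᵥ x)).comp_hasFDerivAt x h1).smul_const a)
  refine h2.congr_fderiv ?_
  ext v i
  have : ∀ y : ℝ, y * (a ⬝ᵥ v) * a i = y * ∑ j, a i * a j * v j := fun y => by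
    simp only [dotProduct, Finset.mul_sum, Finset.sum_mul]
    exact Finset.sum_congr rfl fun j _ => by ring
  simpa [add_mulVec, mulVec, dotProduct, mul_apply, dotProductBilin] using this _

theorem det_fderiv_shear {n : ℕ} (a : Fin n → ℝ) (t : ℝ) :
    (Matrix.toLin' (1 + replicateCol Unit (t • a) *
      replicateRow Unit a)).toContinuousLinearMap.det = 1 + (a ⬝ᵥ a) * t := by
  rw [ContinuousLinearMap.det, LinearMap.coe_toContinuousLinearMap, LinearMap.det_toLin',
    det_one_add_replicateCol_mul_replicateRow, dotProduct_smul, smul_eq_mul, mul_comm]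

theorem gaussD_shear {n : ℕ} (a : Fin n → ℝ) (g : ℝ → ℝ) (x : Fin n → ℝ) :
    gaussD n (shear a g x) = gaussD n x *
      Real.exp (-((a ⬝ᵥ x) * g (a ⬝ᵥ x) + (a ⬝ᵥ a) * g (a ⬝ᵥ x) ^ 2 / 2)) := by
  have : ∑ i, shear a g x i ^ 2 = ∑ i, x i ^ 2 +
      (2 * ((a ⬝ᵥ x) * g (a ⬝ᵥ x)) + (a ⬝ᵥ a) * g (a ⬝ᵥ x) ^ 2) := by
    simp only [shear, Pi.add_apply, Pi.smul_apply, smul_eq_mul]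
    generalize g (a ⬝ᵥ x) = y
    simp only [dotProduct, Finset.mul_sum, Finset.sum_mul, ← Finset.sum_add_distrib]
    exact Finset.sum_congr rfl fun i _ => by ring
  rw [gaussD, gaussD, this, mul_assoc, ← Real.exp_add]
  congr 2
  ring

theorem measurable_gaussD (n : ℕ) : Measurable (gaussD n) := by
  unfold gaussD
  fun_prop

theorem gaussD_nonneg (n : ℕ) (x : Fin n → ℝ) : 0 ≤ gaussD n x := by
  unfold gaussD
  positivity

theorem map_stdGauss_of_shear {n : ℕ} (a : Fin n → ℝ) {g g' : ℝ → ℝ}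
    (hg : ∀ s, HasDerivAt g (g' s) s) (hg' : Continuous g')
    (hgb' : ∀ s, |(a ⬝ᵥ a) * g' s| ≤ 1 / 2) {τ : (Fin n → ℝ) → (Fin n → ℝ)}
    (hτ : IsDiffeo τ (shear a g)) :
    (stdGauss n).map τ = (stdGauss n).withDensity fun x => ENNReal.ofReal
      (Real.exp (-((a ⬝ᵥ x) * g (a ⬝ᵥ x) + (a ⬝ᵥ a) * g (a ⬝ᵥ x) ^ 2 / 2)) *
        (1 + (a ⬝ᵥ a) * g' (a ⬝ᵥ x))) := by
  obtain ⟨hτc, hσc, hl, hr⟩ := hτ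
  have hgc : Continuous g := continuous_iff_continuousAt.2 fun s => (hg s).continuousAt
  have hd := (contDiff_dotProduct a).continuous
  ext s hs
  have himg : τ ⁻¹' s = shear a g '' s :=
    (congrFun (Set.image_eq_preimage_of_inverse hr hl) s).symm
  rw [Measure.map_apply hτc.continuous.measurable hs, himg, stdGauss, withDensity_apply _
      (himg ▸ hτc.continuous.measurable hs),
    lintegral_image_eq_lintegral_abs_det_fderiv_mul volume hs
      (fun x _ => (hasFDerivAt_shear a hg x).hasFDerivWithinAt) hr.injective.injOn,
    ← withDensity_mul _ (measurable_gaussD n).ennreal_ofReal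
      (by fun_prop), withDensity_apply _ hs]
  refine lintegral_congr fun x => ?_
  have hpos : 0 < 1 + (a ⬝ᵥ a) * g' (a ⬝ᵥ x) := by
    have := (abs_le.1 (hgb' (a ⬝ᵥ x))).1; linarith
  rw [det_fderiv_shear, abs_of_pos hpos, gaussD_shear, Pi.mul_apply,
    ← ENNReal.ofReal_mul hpos.le, ← ENNReal.ofReal_mul (gaussD_nonneg n x)]
  congr 1
  ring

instance instIsProbabilityMeasureStdGauss (d : ℕ) : IsProbabilityMeasure (stdGauss d) := by
  rw [stdGauss_eq_pi]; infer_instance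

theorem integrable_exp_abs_apply_stdGauss {d : ℕ} (i : Fin d) :
    Integrable (fun x => Real.exp |x i|) (stdGauss d) := by
  rw [stdGauss_eq_pi]
  refine integrable_comp_eval (X := fun _ => ℝ) (i := i) (f := fun y : ℝ => Real.exp |y|) ?_
  have h1 := ProbabilityTheory.integrable_exp_mul_gaussianReal (μ := 0) (v := 1) 1
  have h2 := ProbabilityTheory.integrable_exp_mul_gaussianReal (μ := 0) (v := 1) (-1)
  refine (h1.add h2).mono' (by fun_prop) (ae_of_all _ fun y => ?_)
  simp only [Real.norm_eq_abs, Real.abs_exp, Pi.add_apply, one_mul, neg_mul]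
  rcases abs_cases y with ⟨h, _⟩ | ⟨h, _⟩ <;> rw [h] <;> linarith [Real.exp_pos y, Real.exp_pos (-y)]

theorem sub_two_mul_sq_le_log_one_add {y : ℝ} (hy : |y| ≤ 1 / 2) :
    y - 2 * y ^ 2 ≤ Real.log (1 + y) := by
  have h := (abs_le.1 hy).1
  have hpos : 0 < 1 + y := by linarith
  refine le_trans ?_ (Real.one_sub_inv_le_log_of_pos hpos)
  rw [← sub_nonneg, show 1 - (1 + y)⁻¹ - (y - 2 * y ^ 2) = y ^ 2 * (1 + 2 * y) / (1 + y) by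
    field_simp; ring]
  have : 0 ≤ 1 + 2 * y := by linarith
  positivity

theorem hasDerivAt_integral_comp_mul {E : Type*} [MeasurableSpace E] {μ : Measure E}
    [IsProbabilityMeasure μ] {s : E → ℝ} (hsm : Measurable s) (hs : Integrable s μ)
    {G G' : ℝ → ℝ} (hG : ∀ y, HasDerivAt G (G' y) y) (hG' : Continuous G')
    (hb : ∀ y, |G y| ≤ 1) (hb' : ∀ y, |G' y| ≤ 1) (t : ℝ) :
    HasDerivAt (fun t => ∫ p, G (t * s p) ∂μ) (∫ p, s p * G' (t * s p) ∂μ) t := by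
  have hGm : Measurable G :=
    (continuous_iff_continuousAt.2 fun y => (hG y).continuousAt).measurable
  have hGm' := hG'.measurable
  refine (hasDerivAt_integral_of_dominated_loc_of_deriv_le (bound := fun p => |s p|)
    (F := fun t p => G (t * s p)) (F' := fun t p => s p * G' (t * s p)) (x₀ := t)
    (Metric.ball_mem_nhds t one_pos) (Eventually.of_forall fun t => ?_) ?_ ?_ ?_ hs.abs ?_).2
  · exact Measurable.aestronglyMeasurable (by fun_prop)
  · exact Integrable.of_bound (C := 1) (Measurable.aestronglyMeasurable (by fun_prop))
      (ae_of_all _ fun p => hb _)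
  · exact Measurable.aestronglyMeasurable (by fun_prop)
  · refine ae_of_all _ fun p t _ => ?_
    rw [Real.norm_eq_abs, abs_mul]
    exact mul_le_of_le_one_right (abs_nonneg _) (hb' _)
  · refine ae_of_all _ fun p t _ => ?_
    have := (hG (t * s p)).comp t ((hasDerivAt_id t).mul_const (s p))
    simpa [mul_comm, Function.comp_def] using this

theorem eq_mul_exp_of_hasDerivAt {u : ℝ → ℝ} {c : ℝ}
    (hu : ∀ t, HasDerivAt u (-(c * t) * u t) t) : u 1 = u 0 * Real.exp (-(c / 2)) := by
  have hd : ∀ t, HasDerivAt (fun t => u t * Real.exp (c * t ^ 2 / 2)) 0 t := fun t => by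
    have h1 : HasDerivAt (fun t : ℝ => c * t ^ 2 / 2) (c * t) t := by
      have := (((hasDerivAt_id t).pow 2).const_mul c).div_const 2
      refine this.congr_deriv ?_
      simp; ring
    refine ((hu t).mul h1.exp).congr_deriv ?_
    ring
  have h := is_const_of_deriv_eq_zero (fun t => (hd t).differentiableAt)
    (fun t => (hd t).deriv) 1 0
  simp only [one_pow, mul_one, ne_eq, OfNat.ofNat_ne_zero, not_false_eq_true, zero_pow, mul_zero,
    zero_div, Real.exp_zero] at h
  rw [← h, mul_assoc, ← Real.exp_add]
  simp

section Stationarity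

variable {r : ℕ} {Y : Type*} [MeasurableSpace Y] {β : Measure Y} [IsProbabilityMeasure β]
  {B : Measure ((Fin r → ℝ) × Y)} [IsProbabilityMeasure B]

theorem integrable_dotProduct_fst_of_klDiv_ne_top
    (hfin : InformationTheory.klDiv B ((stdGauss r).prod β) ≠ ⊤) (a : Fin r → ℝ) :
    Integrable (fun p => a ⬝ᵥ p.1) B := by
  unfold dotProduct
  refine integrable_finsetSum _ fun i _ => Integrable.const_mul ?_ _
  refine integrable_of_klDiv_ne_top B _ (by fun_prop) hfin ?_
  exact (integrable_exp_abs_apply_stdGauss i).comp_fst β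

theorem integral_shear_le
    (hfin : InformationTheory.klDiv B ((stdGauss r).prod β) ≠ ⊤)
    (hopt : ∀ τ σ : (Fin r → ℝ) → (Fin r → ℝ), IsDiffeo τ σ →
      InformationTheory.klDiv B ((stdGauss r).prod β) ≤
        InformationTheory.klDiv B (((stdGauss r).map τ).prod β))
    (a : Fin r → ℝ) {C : ℝ} {g g' : ℝ → ℝ} (hg : ∀ s, HasDerivAt g (g' s) s)
    (hg' : Continuous g') (hgb : ∀ s, |g s| ≤ C) (hgb' : ∀ s, |g' s| ≤ C)
    (hC : (a ⬝ᵥ a) * C ≤ 1 / 2) :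
    ∫ p, ((a ⬝ᵥ a) * g' (a ⬝ᵥ p.1) - (a ⬝ᵥ p.1) * g (a ⬝ᵥ p.1)) ∂B ≤
      ((a ⬝ᵥ a) / 2 + 2 * (a ⬝ᵥ a) ^ 2) * C ^ 2 := by
  set c := a ⬝ᵥ a
  have hc : 0 ≤ c := dotProduct_self_star_nonneg a
  have hcg' : ∀ s, |c * g' s| ≤ 1 / 2 := fun s => by
    rw [abs_mul, abs_of_nonneg hc]
    exact (mul_le_mul_of_nonneg_left (hgb' s) hc).trans hC
  obtain ⟨τ, hτ⟩ := exists_isDiffeo_shear a hg hg' hgb hcg'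
  have hgc : Continuous g := continuous_iff_continuousAt.2 fun s => (hg s).continuousAt
  have hd := (contDiff_dotProduct a).continuous.measurable
  have hdB : Measurable fun p : (Fin r → ℝ) × Y => a ⬝ᵥ p.1 := hd.comp measurable_fst
  have hpos : ∀ s, 0 < 1 + c * g' s := fun s => by
    have := (abs_le.1 (hcg' s)).1; linarith
  set J : (Fin r → ℝ) → ℝ := fun x =>
    Real.exp (-((a ⬝ᵥ x) * g (a ⬝ᵥ x) + c * g (a ⬝ᵥ x) ^ 2 / 2)) * (1 + c * g' (a ⬝ᵥ x)) with hJ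
  have hJm : Measurable J := by
    have := hgc.measurable
    have := hg'.measurable
    fun_prop
  have hJpos : ∀ x, 0 < J x := fun x => mul_pos (Real.exp_pos _) (hpos _)
  have hmap : ((stdGauss r).map τ).prod β =
      ((stdGauss r).prod β).withDensity fun p => ENNReal.ofReal (J p.1) := by
    rw [map_stdGauss_of_shear a hg hg' hcg' hτ, prod_withDensity_left (by fun_prop)]
  have hle := hopt _ _ hτ
  have hprob : IsProbabilityMeasure
      (((stdGauss r).prod β).withDensity fun p => ENNReal.ofReal (J p.1)) := by
    rw [← hmap]
    have := Measure.isProbabilityMeasure_map (μ := stdGauss r) hτ.1.continuous.measurable.aemeasurable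
    infer_instance
  rw [hmap] at hle
  have hs := integrable_dotProduct_fst_of_klDiv_ne_top hfin a
  have hi1 : Integrable (fun p => (a ⬝ᵥ p.1) * g (a ⬝ᵥ p.1)) B :=
    hs.mul_bdd (c := C) (hgc.measurable.comp hdB).aestronglyMeasurable
      (ae_of_all _ fun p => hgb _)
  have hi2 : Integrable (fun p => c * g (a ⬝ᵥ p.1) ^ 2 / 2) B :=
    Integrable.of_bound (C := c * C ^ 2 / 2)
      (by have := hgc.measurable; exact Measurable.aestronglyMeasurable (by fun_prop))
      (ae_of_all _ fun p => by
        rw [Real.norm_eq_abs, abs_of_nonneg (by positivity)]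
        gcongr c * ?_ / 2
        exact sq_le_sq' (abs_le.1 (hgb _)).1 (abs_le.1 (hgb _)).2)
  have hi3 : Integrable (fun p => c * g' (a ⬝ᵥ p.1)) B :=
    Integrable.of_bound (C := 1 / 2)
      (by have := hg'.measurable; exact Measurable.aestronglyMeasurable (by fun_prop))
      (ae_of_all _ fun p => hcg' _)
  have hlog : ∀ p : (Fin r → ℝ) × Y, Real.log (J p.1) =
      -((a ⬝ᵥ p.1) * g (a ⬝ᵥ p.1) + c * g (a ⬝ᵥ p.1) ^ 2 / 2) +
        Real.log (1 + c * g' (a ⬝ᵥ p.1)) := fun p => by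
    rw [hJ, Real.log_mul (Real.exp_pos _).ne' (hpos _).ne', Real.log_exp]
  have hi4 : Integrable (fun p => Real.log (1 + c * g' (a ⬝ᵥ p.1))) B := by
    refine Integrable.of_bound (C := 1)
      (by have := hg'.measurable; exact Measurable.aestronglyMeasurable (by fun_prop))
      (ae_of_all _ fun p => ?_)
    have h1 := sub_two_mul_sq_le_log_one_add (hcg' (a ⬝ᵥ p.1))
    have h2 := Real.log_le_sub_one_of_pos (hpos (a ⬝ᵥ p.1))
    have h3 := abs_le.1 (hcg' (a ⬝ᵥ p.1))
    rw [Real.norm_eq_abs, abs_le]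
    constructor <;> nlinarith
  have hint : Integrable (fun p => Real.log (J p.1)) B := by
    simp only [hlog]
    exact (hi1.add hi2).neg.add hi4
  have key := integral_log_nonpos_of_klDiv_le B ((stdGauss r).prod β)
    (J := fun p => J p.1) (hJm.comp measurable_fst) (fun p => hJpos p.1) hfin hint hle
  have hmono : ∫ p, ((c * g' (a ⬝ᵥ p.1) - (a ⬝ᵥ p.1) * g (a ⬝ᵥ p.1)) -
      (c / 2 + 2 * c ^ 2) * C ^ 2) ∂B ≤ ∫ p, Real.log (J p.1) ∂B := by
    refine integral_mono ((hi3.sub hi1).sub (integrable_const _)) hint fun p => ?_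
    have h1 := sub_two_mul_sq_le_log_one_add (hcg' (a ⬝ᵥ p.1))
    have h2 : g (a ⬝ᵥ p.1) ^ 2 ≤ C ^ 2 := sq_le_sq' (abs_le.1 (hgb _)).1 (abs_le.1 (hgb _)).2
    have h3 : g' (a ⬝ᵥ p.1) ^ 2 ≤ C ^ 2 := sq_le_sq' (abs_le.1 (hgb' _)).1 (abs_le.1 (hgb' _)).2
    have h4 := mul_le_mul_of_nonneg_left h2 hc
    have h5 := mul_le_mul_of_nonneg_left h3 (sq_nonneg c)
    simp only [hlog]
    nlinarith
  have hsub := integral_sub (hi3.sub hi1)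
    (integrable_const (μ := B) ((c / 2 + 2 * c ^ 2) * C ^ 2))
  simp only [Pi.sub_apply, integral_const, probReal_univ, smul_eq_mul, one_mul] at hsub
  linarith [hmono.trans key]

theorem integral_stein_eq_zero
    (hfin : InformationTheory.klDiv B ((stdGauss r).prod β) ≠ ⊤)
    (hopt : ∀ τ σ : (Fin r → ℝ) → (Fin r → ℝ), IsDiffeo τ σ →
      InformationTheory.klDiv B ((stdGauss r).prod β) ≤
        InformationTheory.klDiv B (((stdGauss r).map τ).prod β))
    (a : Fin r → ℝ) {C : ℝ} {g g' : ℝ → ℝ} (hg : ∀ s, HasDerivAt g (g' s) s)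
    (hg' : Continuous g') (hgb : ∀ s, |g s| ≤ C) (hgb' : ∀ s, |g' s| ≤ C) :
    ∫ p, ((a ⬝ᵥ a) * g' (a ⬝ᵥ p.1) - (a ⬝ᵥ p.1) * g (a ⬝ᵥ p.1)) ∂B = 0 := by
  set I := ∫ p, ((a ⬝ᵥ a) * g' (a ⬝ᵥ p.1) - (a ⬝ᵥ p.1) * g (a ⬝ᵥ p.1)) ∂B with hI
  set c := a ⬝ᵥ a
  have hc : 0 ≤ c := dotProduct_self_star_nonneg a
  have hC0 : 0 ≤ C := (abs_nonneg _).trans (hgb 0)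
  set K := (c / 2 + 2 * c ^ 2) * C ^ 2 with hK
  have hstep : ∀ t : ℝ, c * (|t| * C) ≤ 1 / 2 → t * I ≤ K * t ^ 2 := by
    intro t ht
    have h := integral_shear_le hfin hopt a (C := |t| * C) (g := fun s => t * g s)
      (g' := fun s => t * g' s) (fun s => (hg s).const_mul t) (by fun_prop)
      (fun s => by rw [abs_mul]; gcongr; exact hgb s)
      (fun s => by rw [abs_mul]; gcongr; exact hgb' s) ht
    rw [mul_pow, sq_abs] at h
    calc t * I = ∫ p, (c * (t * g' (a ⬝ᵥ p.1)) - (a ⬝ᵥ p.1) * (t * g (a ⬝ᵥ p.1))) ∂B := by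
          rw [hI, ← integral_const_mul]
          exact integral_congr_ae (ae_of_all _ fun p => by ring)
      _ ≤ _ := h
      _ = _ := by ring
  have hlim : ∀ t : ℝ, 0 < t → c * (t * C) ≤ 1 / 2 → |I| ≤ K * t := by
    intro t ht h
    have h1 := hstep t (by rwa [abs_of_pos ht])
    have h2 := hstep (-t) (by rwa [abs_neg, abs_of_pos ht])
    rw [abs_le]
    constructor <;> nlinarith
  have hev : ∀ᶠ t in nhdsWithin (0 : ℝ) (Set.Ioi 0), |I| ≤ K * t := by
    have hcont : Tendsto (fun t : ℝ => c * (t * C)) (nhdsWithin 0 (Set.Ioi 0)) (nhds 0) := by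
      have : Continuous fun t : ℝ => c * (t * C) := by fun_prop
      simpa using (this.tendsto 0).mono_left nhdsWithin_le_nhds
    filter_upwards [self_mem_nhdsWithin, hcont.eventually_le_const (u := 1 / 2) (by norm_num)]
      with t ht h using hlim t ht h
  have hK0 : Tendsto (fun t : ℝ => K * t) (nhdsWithin 0 (Set.Ioi 0)) (nhds 0) := by
    have : Continuous fun t : ℝ => K * t := by fun_prop
    simpa using (this.tendsto 0).mono_left nhdsWithin_le_nhds
  exact abs_nonpos_iff.1 (ge_of_tendsto hK0 hev)

theorem integral_cos_sin_dotProduct_fst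
    (hfin : InformationTheory.klDiv B ((stdGauss r).prod β) ≠ ⊤)
    (hopt : ∀ τ σ : (Fin r → ℝ) → (Fin r → ℝ), IsDiffeo τ σ →
      InformationTheory.klDiv B ((stdGauss r).prod β) ≤
        InformationTheory.klDiv B (((stdGauss r).map τ).prod β))
    (a : Fin r → ℝ) :
    ∫ p, Real.cos (a ⬝ᵥ p.1) ∂B = Real.exp (-((a ⬝ᵥ a) / 2)) ∧
      ∫ p, Real.sin (a ⬝ᵥ p.1) ∂B = 0 := by
  have hs := integrable_dotProduct_fst_of_klDiv_ne_top hfin a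
  have hsm : Measurable fun p : (Fin r → ℝ) × Y => a ⬝ᵥ p.1 :=
    (contDiff_dotProduct a).continuous.measurable.comp measurable_fst
  have hbd : ∀ {G : ℝ → ℝ}, Continuous G → (∀ y, |G y| ≤ 1) → ∀ t : ℝ,
      Integrable (fun p => (a ⬝ᵥ a) * (t * G (t * (a ⬝ᵥ p.1)))) B ∧
        Integrable (fun p => (a ⬝ᵥ p.1) * G (t * (a ⬝ᵥ p.1))) B := fun hG hb t => by
    have hm := (hG.measurable.comp (hsm.const_mul t)).aestronglyMeasurable (μ := B)
    exact ⟨((Integrable.of_bound hm 1 (ae_of_all _ fun p => hb _)).const_mul _).const_mul _,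
      hs.mul_bdd hm (ae_of_all _ fun p => hb _)⟩
  have hcos := fun t => hasDerivAt_integral_comp_mul hsm hs Real.hasDerivAt_cos
    (by fun_prop) Real.abs_cos_le_one (fun y => by simpa using Real.abs_sin_le_one y) t
  have hsin := fun t => hasDerivAt_integral_comp_mul hsm hs Real.hasDerivAt_sin
    Real.continuous_cos Real.abs_sin_le_one Real.abs_cos_le_one t
  have hlin : ∀ t y : ℝ, HasDerivAt (fun y => t * y) t y := fun t y => by
    simpa using (hasDerivAt_id y).const_mul t
  have hb : ∀ t y : ℝ, |y| ≤ 1 → |y| ≤ 1 + |t| ∧ |t * y| ≤ 1 + |t| := fun t y hy => by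
    rw [abs_mul]
    constructor <;> nlinarith [abs_nonneg t, abs_nonneg y]
  have steinCos : ∀ t, ∫ p, (a ⬝ᵥ p.1) * -Real.sin (t * (a ⬝ᵥ p.1)) ∂B =
      -((a ⬝ᵥ a) * t) * ∫ p, Real.cos (t * (a ⬝ᵥ p.1)) ∂B := fun t => by
    have h := integral_stein_eq_zero hfin hopt a (C := 1 + |t|)
      (g := fun y => Real.sin (t * y)) (g' := fun y => t * Real.cos (t * y))
      (fun y => by simpa [mul_comm] using (hlin t y).sin) (by fun_prop)
      (fun y => (hb t _ (Real.abs_sin_le_one _)).1) (fun y => (hb t _ (Real.abs_cos_le_one _)).2)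
    rw [integral_sub (hbd Real.continuous_cos Real.abs_cos_le_one t).1
      (hbd Real.continuous_sin Real.abs_sin_le_one t).2, integral_const_mul,
      integral_const_mul] at h
    simp only [mul_neg, integral_neg]
    linarith
  have steinSin : ∀ t, ∫ p, (a ⬝ᵥ p.1) * Real.cos (t * (a ⬝ᵥ p.1)) ∂B =
      -((a ⬝ᵥ a) * t) * ∫ p, Real.sin (t * (a ⬝ᵥ p.1)) ∂B := fun t => by
    have h := integral_stein_eq_zero hfin hopt a (C := 1 + |t|)
      (g := fun y => Real.cos (t * y)) (g' := fun y => t * -Real.sin (t * y))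
      (fun y => by simpa [mul_comm] using (hlin t y).cos) (by fun_prop)
      (fun y => (hb t _ (Real.abs_cos_le_one _)).1)
      (fun y => (hb t _ (by simpa using Real.abs_sin_le_one _)).2)
    rw [integral_sub (hbd (G := fun y => -Real.sin y) Real.continuous_sin.neg
        (fun y => by simpa using Real.abs_sin_le_one y) t).1
      (hbd Real.continuous_cos Real.abs_cos_le_one t).2, integral_const_mul,
      integral_const_mul, integral_neg] at h
    linarith
  have h1 := eq_mul_exp_of_hasDerivAt fun t => (hcos t).congr_deriv (steinCos t)
  have h2 := eq_mul_exp_of_hasDerivAt fun t => (hsin t).congr_deriv (steinSin t)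
  simpa using And.intro h1 h2

theorem charFunDual_map_fst_apply
    (hfin : InformationTheory.klDiv B ((stdGauss r).prod β) ≠ ⊤)
    (hopt : ∀ τ σ : (Fin r → ℝ) → (Fin r → ℝ), IsDiffeo τ σ →
      InformationTheory.klDiv B ((stdGauss r).prod β) ≤
        InformationTheory.klDiv B (((stdGauss r).map τ).prod β))
    (L : StrongDual ℝ (Fin r → ℝ)) :
    charFunDual (B.map Prod.fst) L =
      Real.exp (-(((fun i => L (Pi.single i 1)) ⬝ᵥ fun i => L (Pi.single i 1)) / 2)) := by
  set a : Fin r → ℝ := fun i => L (Pi.single i 1) with ha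
  have hL : ∀ x, L x = a ⬝ᵥ x := fun x => by
    conv_lhs => rw [pi_eq_sum_univ' x]
    simp [ha, dotProduct, mul_comm]
  obtain ⟨hc, hs⟩ := integral_cos_sin_dotProduct_fst hfin hopt a
  have hsm : Measurable fun p : (Fin r → ℝ) × Y => a ⬝ᵥ p.1 :=
    (contDiff_dotProduct a).continuous.measurable.comp measurable_fst
  have hi : ∀ {G : ℝ → ℝ}, Continuous G → (∀ y, |G y| ≤ 1) →
      Integrable (fun p => G (a ⬝ᵥ p.1)) B := fun hG hb =>
    Integrable.of_bound (hG.measurable.comp hsm).aestronglyMeasurable 1 (ae_of_all _ fun p => hb _)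
  rw [charFunDual_apply, integral_map measurable_fst.aemeasurable (by fun_prop)]
  simp_rw [hL, Complex.exp_mul_I, ← Complex.ofReal_cos, ← Complex.ofReal_sin]
  rw [integral_add (hi Real.continuous_cos Real.abs_cos_le_one).ofReal
    ((hi Real.continuous_sin Real.abs_sin_le_one).ofReal.mul_const _), integral_mul_const,
    integral_complex_ofReal, integral_complex_ofReal, hc, hs]
  simp

theorem map_fst_eq_stdGauss_of_optimal
    (hfin : InformationTheory.klDiv B ((stdGauss r).prod β) ≠ ⊤)
    (hopt : ∀ τ σ : (Fin r → ℝ) → (Fin r → ℝ), IsDiffeo τ σ →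
      InformationTheory.klDiv B ((stdGauss r).prod β) ≤
        InformationTheory.klDiv B (((stdGauss r).map τ).prod β)) :
    B.map Prod.fst = stdGauss r := by
  have := Measure.isProbabilityMeasure_map (μ := B) measurable_fst.aemeasurable
  have hself : InformationTheory.klDiv ((stdGauss r).prod β) ((stdGauss r).prod β) = 0 :=
    InformationTheory.klDiv_self _
  have hg : ((stdGauss r).prod β).map Prod.fst = stdGauss r := by
    rw [Measure.map_fst_prod]; simp
  refine Measure.ext_of_charFunDual (funext fun L => ?_)
  rw [charFunDual_map_fst_apply hfin hopt, ← hg, charFunDual_map_fst_apply (β := β)]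
  · rw [hself]; exact ENNReal.zero_ne_top
  · intro τ σ _; rw [hself]; exact zero_le

theorem klDiv_prod_eq_add (α α' : Measure (Fin r → ℝ)) [IsProbabilityMeasure α]
    [IsProbabilityMeasure α'] [StandardBorelSpace Y] [Nonempty Y]
    (hfst : B.map Prod.fst = α') :
    InformationTheory.klDiv B (α.prod β) =
      InformationTheory.klDiv α' α + InformationTheory.klDiv B (α'.prod β) := by
  have hB : Measure.compProd α' B.condKernel = B := by
    rw [← hfst]; exact B.disintegrate B.condKernel
  have h := InformationTheory.klDiv_compProd_eq_add α' α B.condKernel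
    (ProbabilityTheory.Kernel.const _ β)
  rwa [hB, Measure.compProd_const, Measure.compProd_const] at h

end Stationarity

/-- Splitting of a vector of `ℝ^d` into its first `r` and its last `d - r` coordinates. -/
def splitEquiv {d r : ℕ} (hr : r ≤ d) :
    (Fin d → ℝ) ≃ᵐ (Fin r → ℝ) × (Fin (d - r) → ℝ) :=
  (MeasurableEquiv.piCongrLeft (fun _ => ℝ)
    (finSumFinEquiv.trans (finCongr (Nat.add_sub_of_le hr)))).symm.trans
    (MeasurableEquiv.sumPiEquivProdPi fun _ => ℝ)

theorem map_splitEquiv_stdGauss {d r : ℕ} (hr : r ≤ d) :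
    (stdGauss d).map (splitEquiv hr) = (stdGauss r).prod (stdGauss (d - r)) := by
  simp only [stdGauss_eq_pi]
  exact ((measurePreserving_sumPiEquivProdPi fun _ => ProbabilityTheory.gaussianReal 0 1).comp
    (measurePreserving_piCongrLeft (fun _ => ProbabilityTheory.gaussianReal 0 1)
      (finSumFinEquiv.trans (finCongr (Nat.add_sub_of_le hr)))).symm).map_eq

/-- The rotation `x ↦ Uᵀ x` for an orthogonal matrix `U`. -/
def rotateEquiv {d : ℕ} {U : Matrix (Fin d) (Fin d) ℝ} (hU : U * Uᵀ = 1) :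
    (Fin d → ℝ) ≃ᵐ (Fin d → ℝ) where
  toFun x := Uᵀ *ᵥ x
  invFun x := U *ᵥ x
  left_inv x := by simp [hU]
  right_inv x := by simp [mul_eq_one_comm.1 hU]
  measurable_toFun := by simp only [Equiv.coe_fn_mk]; unfold mulVec dotProduct; fun_prop
  measurable_invFun := by simp only [Equiv.coe_fn_symm_mk]; unfold mulVec dotProduct; fun_prop

theorem map_rotateEquiv_stdGauss {d : ℕ} {U : Matrix (Fin d) (Fin d) ℝ} (hU : U * Uᵀ = 1) :
    (stdGauss d).map (rotateEquiv hU) = stdGauss d := by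
  have hdet : |Uᵀ.det| = 1 := by
    have h := congrArg Matrix.det hU
    rw [det_mul, det_transpose, det_one] at h
    rw [det_transpose]
    rcases mul_self_eq_one_iff.1 h with h | h <;> simp [h]
  have hmp : MeasurePreserving (rotateEquiv hU) volume volume := by
    refine ⟨(rotateEquiv hU).measurable, ?_⟩
    have h := Real.map_matrix_volume_pi_eq_smul_volume_pi (M := Uᵀ)
      (abs_ne_zero.1 (by rw [hdet]; exact one_ne_zero))
    rw [abs_inv, hdet, inv_one, ENNReal.ofReal_one, one_smul] at h
    exact h
  have hgauss : ∀ x, gaussD d (rotateEquiv hU x) = gaussD d x := fun x => by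
    have : ∀ y : Fin d → ℝ, ∑ i, y i ^ 2 = y ⬝ᵥ y := fun y => by
      simp [dotProduct, sq]
    rw [gaussD, gaussD, this, this]
    change (2 * Real.pi) ^ (-(d : ℝ) / 2) * Real.exp (-((Uᵀ *ᵥ x) ⬝ᵥ (Uᵀ *ᵥ x)) / 2) = _
    rw [dotProduct_mulVec, vecMul_transpose, mulVec_mulVec, hU, one_mulVec]
  ext s hs
  rw [Measure.map_apply (rotateEquiv hU).measurable hs, stdGauss,
    withDensity_apply _ ((rotateEquiv hU).measurable hs), withDensity_apply _ hs,
    ← hmp.setLIntegral_comp_preimage hs (measurable_gaussD d).ennreal_ofReal]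
  simp only [hgauss]

/-- The coordinates `x ↦ (U_rᵀ x, U_⊥ᵀ x)` in an orthogonal frame. -/
def frameEquiv {d r : ℕ} (hr : r ≤ d) {U : Matrix (Fin d) (Fin d) ℝ} (hU : U * Uᵀ = 1) :
    (Fin d → ℝ) ≃ᵐ (Fin r → ℝ) × (Fin (d - r) → ℝ) :=
  (rotateEquiv hU).trans (splitEquiv hr)

section Frame

variable {d r : ℕ} (hr : r ≤ d) {U : Matrix (Fin d) (Fin d) ℝ} (hU : U * Uᵀ = 1)

theorem map_frameEquiv_stdGauss :
    (stdGauss d).map (frameEquiv hr hU) = (stdGauss r).prod (stdGauss (d - r)) := by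
  rw [← map_splitEquiv_stdGauss hr, frameEquiv, MeasurableEquiv.coe_trans, ← Measure.map_map
    (splitEquiv hr).measurable (rotateEquiv hU).measurable, map_rotateEquiv_stdGauss]

theorem frameEquiv_symm_apply (p : (Fin r → ℝ) × (Fin (d - r) → ℝ)) :
    (frameEquiv hr hU).symm p = colsFirst r hr U *ᵥ p.1 + colsLast r hr U *ᵥ p.2 := by
  obtain ⟨x, rfl⟩ := (splitEquiv hr).surjective p
  change U *ᵥ ((splitEquiv hr).symm (splitEquiv hr x)) = _
  rw [MeasurableEquiv.symm_apply_apply]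
  ext i
  simp only [mulVec, dotProduct, Pi.add_apply]
  rw [← (finSumFinEquiv.trans (finCongr (Nat.add_sub_of_le hr))).sum_comp, Fintype.sum_sum_type]
  rfl

theorem lazyMap_eq_frameEquiv_symm (τ : (Fin r → ℝ) → (Fin r → ℝ)) :
    lazyMap hr U τ = (frameEquiv hr hU).symm ∘ Prod.map τ id ∘ splitEquiv hr := by
  ext1 z
  simp only [Function.comp_apply, frameEquiv_symm_apply]
  rfl

theorem klDiv_map_lazyMap (P : Measure (Fin d → ℝ)) [IsProbabilityMeasure P]
    {τ : (Fin r → ℝ) → (Fin r → ℝ)} (hτ : Measurable τ) :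
    klDiv P ((stdGauss d).map (lazyMap hr U τ)) = InformationTheory.klDiv
      (P.map (frameEquiv hr hU)) (((stdGauss r).map τ).prod (stdGauss (d - r))) := by
  have hτ' : Measurable (Prod.map τ (id : (Fin (d - r) → ℝ) → _)) := hτ.prodMap measurable_id
  have hmap : ((stdGauss d).map (lazyMap hr U τ)).map (frameEquiv hr hU) =
      ((stdGauss r).map τ).prod (stdGauss (d - r)) := by
    have hcomp : frameEquiv hr hU ∘ lazyMap hr U τ = Prod.map τ id ∘ splitEquiv hr := by
      rw [lazyMap_eq_frameEquiv_symm hr hU]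
      ext1 z
      simp
    have hlm : Measurable (lazyMap hr U τ) := by
      rw [lazyMap_eq_frameEquiv_symm hr hU]
      exact (frameEquiv hr hU).symm.measurable.comp (hτ'.comp (splitEquiv hr).measurable)
    rw [Measure.map_map (frameEquiv hr hU).measurable hlm, hcomp,
      ← Measure.map_map hτ' (splitEquiv hr).measurable, map_splitEquiv_stdGauss,
      ← Measure.map_prod_map _ _ hτ measurable_id, Measure.map_id]
  have hprob : IsProbabilityMeasure ((stdGauss d).map (lazyMap hr U τ)) := by
    have := Measure.isProbabilityMeasure_map (μ := stdGauss r) hτ.aemeasurable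
    have h : IsProbabilityMeasure
        (((stdGauss d).map (lazyMap hr U τ)).map (frameEquiv hr hU)) := by
      rw [hmap]; infer_instance
    exact Measure.isProbabilityMeasure_of_map (frameEquiv hr hU)
  rw [klDiv_eq_informationTheory_klDiv, ← klDiv_map_measurableEquiv _ _ (frameEquiv hr hU), hmap]

end Frame

/-- One greedy step: pulling back by an optimal lazy map lowers the divergence to the standard
Gaussian by exactly the divergence of the marginal `(U_rᵀ)_♯ P`. -/
theorem klDiv_map_inverse_add_klDiv_marginal {d r : ℕ} (hr : r ≤ d)
    {U : Matrix (Fin d) (Fin d) ℝ} (hU : U * Uᵀ = 1) (P : Measure (Fin d → ℝ)) [IsProbabilityMeasure P]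
    (hfin : klDiv P (stdGauss d) ≠ ⊤) {T S : (Fin d → ℝ) → (Fin d → ℝ)}
    (hlazy : IsLazy r hr U T) (hl : Function.LeftInverse S T)
    (hmin : ∀ T', IsLazy r hr U T' →
      klDiv P ((stdGauss d).map T) ≤ klDiv P ((stdGauss d).map T')) :
    IsProbabilityMeasure (P.map S) ∧
      klDiv (P.map S) (stdGauss d) +
        klDiv (P.map fun x => (colsFirst r hr U)ᵀ *ᵥ x) (stdGauss r) = klDiv P (stdGauss d) := by
  obtain ⟨τ, σ, hd, rfl⟩ := hlazy
  obtain ⟨hτc, hσc, hστ, hτσ⟩ := hd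
  have hτ := hτc.continuous.measurable
  let t : (Fin r → ℝ) ≃ᵐ (Fin r → ℝ) := ⟨⟨τ, σ, hστ, hτσ⟩, hτ, hσc.continuous.measurable⟩
  let E := t.prodCongr (MeasurableEquiv.refl (Fin (d - r) → ℝ))
  let F := frameEquiv hr hU
  let G := splitEquiv hr
  let M := G.trans (E.trans F.symm)
  have hM : lazyMap hr U τ = M := lazyMap_eq_frameEquiv_symm hr hU τ
  have hS : S = M.symm := funext fun y => by
    conv_lhs => rw [← M.apply_symm_apply y, ← hM]
    exact hl _
  have hQ : IsProbabilityMeasure (P.map S) := by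
    rw [hS]; exact Measure.isProbabilityMeasure_map M.symm.measurable.aemeasurable
  refine ⟨hQ, ?_⟩
  set α := stdGauss r
  set β := stdGauss (d - r)
  set A := P.map F with hA
  set B := (P.map S).map G with hB
  have hAp : IsProbabilityMeasure A := Measure.isProbabilityMeasure_map F.measurable.aemeasurable
  have hBp : IsProbabilityMeasure B := Measure.isProbabilityMeasure_map G.measurable.aemeasurable
  have hBA : B.map E = A := by
    rw [hB, hS, Measure.map_map G.measurable M.symm.measurable,
      Measure.map_map E.measurable (G.measurable.comp M.symm.measurable)]
    congr 1
    ext1 x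
    simp [M]
  have hmapE : ∀ τ' : (Fin r → ℝ) → (Fin r → ℝ), Measurable τ' →
      (((α.map τ').prod β).map E) = (α.map (τ ∘ τ')).prod β := fun τ' hτ' => by
    have := Measure.isProbabilityMeasure_map (μ := α) hτ'.aemeasurable
    change ((α.map τ').prod β).map (Prod.map τ id) = _
    rw [← Measure.map_prod_map _ _ hτ measurable_id, Measure.map_id, Measure.map_map hτ hτ']
  have hKL : ∀ τ' : (Fin r → ℝ) → (Fin r → ℝ), Measurable τ' →
      InformationTheory.klDiv B ((α.map τ').prod β) =
        klDiv P ((stdGauss d).map (lazyMap hr U (τ ∘ τ'))) := fun τ' hτ' => by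
    have := Measure.isProbabilityMeasure_map (μ := α) hτ'.aemeasurable
    rw [klDiv_map_lazyMap hr hU P (hτ.comp hτ'), ← hmapE τ' hτ',
      show P.map (frameEquiv hr hU) = B.map E from hBA.symm, klDiv_map_measurableEquiv]
  have hKLB : InformationTheory.klDiv B (α.prod β) =
      klDiv P ((stdGauss d).map (lazyMap hr U τ)) := by
    simpa using hKL id measurable_id
  have hKLA : InformationTheory.klDiv A (α.prod β) = klDiv P (stdGauss d) := by
    rw [klDiv_eq_informationTheory_klDiv, ← klDiv_map_measurableEquiv P _ F,
      map_frameEquiv_stdGauss]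
  have hopt : ∀ τ' σ' : (Fin r → ℝ) → (Fin r → ℝ), IsDiffeo τ' σ' →
      InformationTheory.klDiv B (α.prod β) ≤
        InformationTheory.klDiv B ((α.map τ').prod β) := fun τ' σ' h => by
    rw [hKLB, hKL τ' h.1.continuous.measurable]
    exact hmin _ ⟨τ ∘ τ', σ' ∘ σ, ⟨hτc.comp h.1, h.2.1.comp hσc, hστ.comp h.2.2.1,
      hτσ.comp h.2.2.2⟩, rfl⟩
  have hfinB : InformationTheory.klDiv B (α.prod β) ≠ ⊤ := by
    rw [hKLB]
    refine ne_top_of_le_ne_top hfin ((hmin _ ⟨id, id, ⟨contDiff_id, contDiff_id,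
      fun _ => rfl, fun _ => rfl⟩, rfl⟩).trans_eq ?_)
    rw [klDiv_map_lazyMap hr hU P measurable_id, Measure.map_id, hKLA]
  have hfst : B.map Prod.fst = α := map_fst_eq_stdGauss_of_optimal hfinB hopt
  have hαp := Measure.isProbabilityMeasure_map (μ := α) hτ.aemeasurable
  have hAfst : A.map Prod.fst = α.map τ := by
    rw [← hBA, Measure.map_map measurable_fst E.measurable, ← hfst,
      Measure.map_map hτ measurable_fst]
    rfl
  have hmarg : (P.map fun x => (colsFirst r hr U)ᵀ *ᵥ x) = α.map τ := by
    rw [← hAfst, hA, Measure.map_map measurable_fst F.measurable]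
    rfl
  have hKLQ : klDiv (P.map S) (stdGauss d) = InformationTheory.klDiv B (α.prod β) := by
    rw [klDiv_eq_informationTheory_klDiv, ← klDiv_map_measurableEquiv _ _ G,
      map_splitEquiv_stdGauss]
  have hAB : InformationTheory.klDiv A ((α.map τ).prod β) =
      InformationTheory.klDiv B (α.prod β) := by
    rw [hKLB, klDiv_map_lazyMap hr hU P hτ]
  rw [hmarg, hKLQ, ← hKLA, klDiv_prod_eq_add α (α.map τ) hAfst, hAB,
    klDiv_eq_informationTheory_klDiv, add_comm]

/-- telescoping of KL under the greedy composition of optimal lazy maps: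
`D_KL(π_ℓ ‖ ρ) = D_KL(π ‖ ρ) − Σ_{k=1}^{ℓ} R_k` with
`R_k = D_KL((U_r^{kᵀ})_♯ π_{k−1} ‖ ρ_r)`; in particular `R_k → 0` when `D_KL(π ‖ ρ) < ∞`. -/
theorem kl_telescoping_greedy {d r : ℕ} (hr : r ≤ d)
    (πm : Measure (Fin d → ℝ)) [IsProbabilityMeasure πm] (hac : πm ≪ volume)
    (U : ℕ → Matrix (Fin d) (Fin d) ℝ) (hUo : ∀ ℓ, U ℓ * (U ℓ)ᵀ = 1)
    (T S : ℕ → (Fin d → ℝ) → (Fin d → ℝ))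
    (hlazy : ∀ ℓ, IsLazy r hr (U (ℓ + 1)) (T (ℓ + 1)))
    (hinv : ∀ ℓ, Function.LeftInverse (S (ℓ + 1)) (T (ℓ + 1)) ∧
      Function.RightInverse (S (ℓ + 1)) (T (ℓ + 1)))
    (πseq : ℕ → Measure (Fin d → ℝ))
    (hπ0 : πseq 0 = πm)
    (hπs : ∀ ℓ, πseq (ℓ + 1) = Measure.map (S (ℓ + 1)) (πseq ℓ))
    (hmin : ∀ ℓ, ∀ T' : (Fin d → ℝ) → (Fin d → ℝ), IsLazy r hr (U (ℓ + 1)) T' →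
      klDiv (πseq ℓ) (Measure.map (T (ℓ + 1)) (stdGauss d)) ≤
        klDiv (πseq ℓ) (Measure.map T' (stdGauss d)))
    (R : ℕ → ℝ≥0∞)
    (hR : ∀ ℓ, R (ℓ + 1) =
      klDiv (Measure.map (fun x => (colsFirst r hr (U (ℓ + 1)))ᵀ.mulVec x) (πseq ℓ))
        (stdGauss r))
    (hfin : klDiv πm (stdGauss d) ≠ ⊤) :
    (∀ ℓ, klDiv (πseq ℓ) (stdGauss d) =
      klDiv πm (stdGauss d) - ∑ k ∈ Finset.range ℓ, R (k + 1)) ∧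
    Tendsto (fun k => R (k + 1)) atTop (nhds 0) := by
  have hstep : ∀ ℓ, IsProbabilityMeasure (πseq ℓ) ∧ klDiv (πseq ℓ) (stdGauss d) +
      ∑ k ∈ Finset.range ℓ, R (k + 1) = klDiv πm (stdGauss d) := by
    intro ℓ
    induction ℓ with
    | zero => rw [hπ0]; exact ⟨inferInstance, by simp⟩
    | succ ℓ ih =>
      obtain ⟨hp, hsum⟩ := ih
      have hfinℓ : klDiv (πseq ℓ) (stdGauss d) ≠ ⊤ :=
        ne_top_of_le_ne_top hfin (hsum ▸ le_self_add)
      obtain ⟨hp', h⟩ := klDiv_map_inverse_add_klDiv_marginal hr (hUo (ℓ + 1)) (πseq ℓ) hfinℓ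
        (hlazy ℓ) (hinv ℓ).1 (hmin ℓ)
      rw [hπs ℓ]
      refine ⟨hp', ?_⟩
      rw [Finset.sum_range_succ, hR ℓ, add_comm (∑ k ∈ Finset.range ℓ, R (k + 1)), ← add_assoc, h,
        hsum]
  have hle : ∀ ℓ, ∑ k ∈ Finset.range ℓ, R (k + 1) ≤ klDiv πm (stdGauss d) := fun ℓ =>
    (hstep ℓ).2 ▸ le_add_self
  refine ⟨fun ℓ => ENNReal.eq_sub_of_add_eq (ne_top_of_le_ne_top hfin (hle ℓ)) (hstep ℓ).2, ?_⟩
  refine ENNReal.tendsto_atTop_zero_of_tsum_ne_top (ne_top_of_le_ne_top hfin ?_)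
  exact ENNReal.tsum_le_of_sum_range_le hle
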